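/- arXiv:1610.05969 — 2 statements merged into one kernel-verified Lean document; each statement's English description precedes it below -/
import Mathlib

section
/- Principal value of the Stieltjes transform of the semicircle law: for every θ with −√2 < θ < √2, the principal value integral P.V. ∫_{−√2}^{√2} (1/(θ − y)) · (1/π) √(2 − y²) dy, i.e. the limit as δ ↓ 0 of ∫ over {y ∈ [−√2, √2] : |y − θ| ≥ δ} of (√(2 − y²))/(π(θ − y)) dy, exists and equals θ. -/
open Real MeasureTheory Filter Set

/-- Physicists' Hermite polynomial `H_n(x) = (-1)^n e^{x^2} (d/dx)^n e^{-x^2}`. -/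
noncomputable def hermiteP (n : ℕ) (x : ℝ) : ℝ :=
  (-1 : ℝ) ^ n * Real.exp (x ^ 2) * iteratedDeriv n (fun t => Real.exp (-t ^ 2)) x

/-- Oscillator wave function `ψ_n(x) = (√π 2^n n!)^{-1/2} e^{-x^2/2} H_n(x)`. -/
noncomputable def osc (n : ℕ) (x : ℝ) : ℝ :=
  (Real.sqrt (Real.sqrt Real.pi * 2 ^ n * (n.factorial : ℝ)))⁻¹ *
    Real.exp (-x ^ 2 / 2) * hermiteP n x

/-- The kernel `K^N(x,y) = Σ_{k=0}^{N-1} ψ_k(x) ψ_k(y)`. -/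
noncomputable def kerK (N : ℕ) (x y : ℝ) : ℝ :=
  ∑ k ∈ Finset.range N, osc k x * osc k y

/-- The rescaled kernel `L^N(x,y) = N^{-1/2} K^N(√N x, √N y)`. -/
noncomputable def kerL (N : ℕ) (x y : ℝ) : ℝ :=
  (Real.sqrt (N : ℝ))⁻¹ * kerK N (Real.sqrt (N : ℝ) * x) (Real.sqrt (N : ℝ) * y)

/-!
Writing `√(R² - y²) / (θ - y)` as
`(θ + y) / √(R² - y²) + (R² - θ²) / ((θ - y) √(R² - y²))` splits the principal value in two.
The first summand is integrable, with integral `π θ`. The second is a multiple of the Hilbert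
transform of the arcsine law, which vanishes inside the support: its antiderivative takes equal
values at `±R`, and its logarithmic singularity at `θ` is even about `θ`, so the contributions of
the two sides of the excised interval cancel in the limit.
-/

open scoped Topology

section PrincipalValue

theorem setOf_mem_Icc_and_le_abs_sub {α : Type*} [AddCommGroup α] [LinearOrder α]
    [IsOrderedAddMonoid α] {a b c δ : α} (hc : c ∈ Icc a b) (hδ : 0 ≤ δ) :
    {y : α | y ∈ Icc a b ∧ δ ≤ |y - c|} = Icc a (c - δ) ∪ Icc (c + δ) b := by
  obtain ⟨hac, hcb⟩ := hc
  ext y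
  simp only [mem_ofPred_eq, mem_Icc, mem_union, le_abs]
  grind

theorem tendsto_add_sub_sub_of_continuousAt {G H : Type*} [AddGroup G] [TopologicalSpace G]
    [IsTopologicalAddGroup G] [AddGroup H] [TopologicalSpace H] [IsTopologicalAddGroup H]
    {g : G → H} {x : G} (hg : ContinuousAt g x) :
    Tendsto (fun δ => g (x + δ) - g (x - δ)) (𝓝 0) (𝓝 0) := by
  have hadd : Tendsto (fun δ => x + δ) (𝓝 0) (𝓝 x) := by
    simpa using (continuous_const_add x).tendsto 0
  have hsub : Tendsto (fun δ => x - δ) (𝓝 0) (𝓝 x) := by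
    simpa using (continuous_sub_left x).tendsto 0
  simpa using (hg.tendsto.comp hadd).sub (hg.tendsto.comp hsub)

variable {E : Type*} [NormedAddCommGroup E] [NormedSpace ℝ E] [CompleteSpace E]
  {f F : ℝ → E} {a b c : ℝ}

theorem setIntegral_Icc_eq_sub_of_hasDerivAt (hab : a ≤ b) (hcont : ContinuousOn F (Icc a b))
    (hderiv : ∀ y ∈ Ioo a b, HasDerivAt F (f y) y) (hint : IntegrableOn f (Icc a b)) :
    ∫ y in Icc a b, f y = F b - F a := by
  rw [integral_Icc_eq_integral_Ioc, ← intervalIntegral.integral_of_le hab]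
  exact intervalIntegral.integral_eq_sub_of_hasDerivAt_of_le hab hcont hderiv
    ((intervalIntegrable_iff_integrableOn_Icc_of_le hab).2 hint)

theorem setIntegral_le_abs_sub_eq_of_hasDerivAt {δ : ℝ} (hδ : 0 < δ) (ha : a ≤ c - δ)
    (hb : c + δ ≤ b) (hcont : ContinuousOn F (Icc a b \ {c}))
    (hderiv : ∀ y ∈ Ioo a b \ {c}, HasDerivAt F (f y) y)
    (hint : LocallyIntegrableOn f (Icc a b \ {c})) :
    ∫ y in {y : ℝ | y ∈ Icc a b ∧ δ ≤ |y - c|}, f y =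
      F b - F a - (F (c + δ) - F (c - δ)) := by
  have piece {u v : ℝ} (huv : u ≤ v) (hau : a ≤ u) (hvb : v ≤ b) (hc : c ∉ Icc u v) :
      IntegrableOn f (Icc u v) ∧ ∫ y in Icc u v, f y = F v - F u := by
    have hIcc : Icc u v ⊆ Icc a b \ {c} :=
      subset_sdiff_singleton (Icc_subset_Icc hau hvb) hc
    have hIoo : Ioo u v ⊆ Ioo a b \ {c} :=
      subset_sdiff_singleton (Ioo_subset_Ioo hau hvb) fun h => hc (Ioo_subset_Icc_self h)
    have hf := hint.integrableOn_compact_subset hIcc isCompact_Icc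
    exact ⟨hf, setIntegral_Icc_eq_sub_of_hasDerivAt huv (hcont.mono hIcc)
      (fun y hy => hderiv y (hIoo hy)) hf⟩
  obtain ⟨hintLeft, hleft⟩ := piece ha le_rfl (by linarith) fun h => by linarith [h.2]
  obtain ⟨hintRight, hright⟩ := piece hb (by linarith) le_rfl fun h => by linarith [h.1]
  have hdisj : Disjoint (Icc a (c - δ)) (Icc (c + δ) b) :=
    disjoint_left.2 fun y hy hy' => by linarith [hy.2, hy'.1]
  rw [setOf_mem_Icc_and_le_abs_sub ⟨by linarith, by linarith⟩ hδ.le,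
    setIntegral_union hdisj measurableSet_Icc hintLeft hintRight, hleft, hright]
  abel

theorem tendsto_setIntegral_le_abs_sub_of_hasDerivAt (hc : c ∈ Ioo a b)
    (hcont : ContinuousOn F (Icc a b \ {c}))
    (hderiv : ∀ y ∈ Ioo a b \ {c}, HasDerivAt F (f y) y)
    (hint : LocallyIntegrableOn f (Icc a b \ {c})) {j : E}
    (hjump : Tendsto (fun δ => F (c + δ) - F (c - δ)) (𝓝[>] 0) (𝓝 j)) :
    Tendsto (fun δ => ∫ y in {y : ℝ | y ∈ Icc a b ∧ δ ≤ |y - c|}, f y)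
      (𝓝[>] 0) (𝓝 (F b - F a - j)) := by
  have hpos : 0 < min (c - a) (b - c) := lt_min (sub_pos.2 hc.1) (sub_pos.2 hc.2)
  refine (hjump.const_sub (F b - F a)).congr' ?_
  filter_upwards [Ioo_mem_nhdsGT hpos] with δ ⟨hδ, hδ_lt⟩
  obtain ⟨hδa, hδb⟩ := lt_min_iff.1 hδ_lt
  exact (setIntegral_le_abs_sub_eq_of_hasDerivAt hδ (by linarith) (by linarith)
    hcont hderiv hint).symm

end PrincipalValue

section Primitive

variable {R θ y : ℝ}

theorem sq_sub_sq_pos_of_mem_Ioo (hy : y ∈ Ioo (-R) R) : 0 < R ^ 2 - y ^ 2 :=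
  sub_pos.2 (sq_lt_sq' hy.1 hy.2)

theorem hasDerivAt_sqrt_sq_sub_sq (hy : y ∈ Ioo (-R) R) :
    HasDerivAt (fun y => √(R ^ 2 - y ^ 2)) (-y / √(R ^ 2 - y ^ 2)) y := by
  have hpoly : HasDerivAt (fun y => R ^ 2 - y ^ 2) (-(2 * y)) y := by
    simpa using (hasDerivAt_pow 2 y).const_sub (R ^ 2)
  refine (hpoly.sqrt (sq_sub_sq_pos_of_mem_Ioo hy).ne').congr_deriv ?_
  rw [← mul_neg, mul_div_mul_left _ _ two_ne_zero]

theorem hasDerivAt_arcsin_div (hy : y ∈ Ioo (-R) R) :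
    HasDerivAt (fun y => arcsin (y / R)) (1 / √(R ^ 2 - y ^ 2)) y := by
  have hR : 0 < R := by linarith [hy.1, hy.2]
  have hlower : -1 < y / R := by rw [lt_div_iff₀ hR]; linarith [hy.1]
  have hupper : y / R < 1 := (div_lt_one hR).2 hy.2
  refine ((hasDerivAt_arcsin hlower.ne' hupper.ne).comp y
    ((hasDerivAt_id y).div_const R)).congr_deriv ?_
  have hsqrt : √(1 - (y / R) ^ 2) = √(R ^ 2 - y ^ 2) / R := by
    rw [show 1 - (y / R) ^ 2 = (R ^ 2 - y ^ 2) / R ^ 2 by field_simp,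
      sqrt_div' _ (sq_nonneg R), sqrt_sq hR.le]
  rw [hsqrt]
  field_simp

/-- The antiderivative in `y` of the normalised Cauchy kernel
`√(R² - θ²) / ((θ - y) √(R² - y²))` of the arcsine law. With `θ = R sin α` and `y = R sin t` it is
`log |R cos ((α + t) / 2) / sin ((α - t) / 2)|`. Since `Real.log x = log |x|`, one formula serves
both sides of `θ`. -/
noncomputable def arcsinePrimitive (R θ y : ℝ) : ℝ :=
  log (R ^ 2 - θ * y + √(R ^ 2 - θ ^ 2) * √(R ^ 2 - y ^ 2)) - log (θ - y)

theorem sq_sub_mul_add_sqrt_mul_sqrt_pos (hθ : θ ∈ Ioo (-R) R) (hy : y ∈ Icc (-R) R) :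
    0 < R ^ 2 - θ * y + √(R ^ 2 - θ ^ 2) * √(R ^ 2 - y ^ 2) := by
  have hmul : θ * y < R ^ 2 := calc
    θ * y ≤ |θ| * |y| := (le_abs_self _).trans_eq (abs_mul θ y)
    _ ≤ |θ| * R := by gcongr; exact abs_le.2 hy
    _ < R * R := by
      gcongr
      · linarith [hθ.1, hθ.2]
      · exact abs_lt.2 hθ
    _ = R ^ 2 := (sq R).symm
  have := sub_pos.2 hmul
  positivity

theorem hasDerivAt_arcsinePrimitive (hθ : θ ∈ Ioo (-R) R) (hy : y ∈ Ioo (-R) R) (hne : y ≠ θ) :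
    HasDerivAt (arcsinePrimitive R θ) (√(R ^ 2 - θ ^ 2) / ((θ - y) * √(R ^ 2 - y ^ 2))) y := by
  have hpos := sq_sub_mul_add_sqrt_mul_sqrt_pos hθ (Ioo_subset_Icc_self hy)
  have hy_pos := sq_sub_sq_pos_of_mem_Ioo hy
  have hr_ne : √(R ^ 2 - y ^ 2) ≠ 0 := (sqrt_pos.2 hy_pos).ne'
  have hr : √(R ^ 2 - y ^ 2) ^ 2 = R ^ 2 - y ^ 2 := sq_sqrt hy_pos.le
  have hs : √(R ^ 2 - θ ^ 2) ^ 2 = R ^ 2 - θ ^ 2 := sq_sqrt (sq_sub_sq_pos_of_mem_Ioo hθ).le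
  have hθy : θ - y ≠ 0 := sub_ne_zero.2 hne.symm
  have hlinear : HasDerivAt (fun y => R ^ 2 - θ * y) (-θ) y := by
    simpa using ((hasDerivAt_id y).const_mul θ).const_sub (R ^ 2)
  have hnum :=
    (hlinear.add ((hasDerivAt_sqrt_sq_sub_sq hy).const_mul √(R ^ 2 - θ ^ 2))).log hpos.ne'
  have hden := ((hasDerivAt_id y).const_sub θ).log hθy
  refine (hnum.sub hden).congr_deriv ?_
  simp only [Pi.add_apply, id_eq]
  generalize √(R ^ 2 - y ^ 2) = r at *
  generalize √(R ^ 2 - θ ^ 2) = s at *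
  field_simp
  linear_combination s * hr - r * hs

theorem continuousOn_log_sq_sub_mul_add_sqrt_mul_sqrt (hθ : θ ∈ Ioo (-R) R) :
    ContinuousOn (fun y => log (R ^ 2 - θ * y + √(R ^ 2 - θ ^ 2) * √(R ^ 2 - y ^ 2)))
      (Icc (-R) R) :=
  ContinuousOn.log (by fun_prop) fun _ hy => (sq_sub_mul_add_sqrt_mul_sqrt_pos hθ hy).ne'

theorem continuousOn_arcsinePrimitive (hθ : θ ∈ Ioo (-R) R) :
    ContinuousOn (arcsinePrimitive R θ) (Icc (-R) R \ {θ}) :=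
  ((continuousOn_log_sq_sub_mul_add_sqrt_mul_sqrt hθ).mono sdiff_subset).sub
    (ContinuousOn.log (by fun_prop) fun _ hy => sub_ne_zero.2 (Ne.symm hy.2))

theorem tendsto_arcsinePrimitive_add_sub_sub (hθ : θ ∈ Ioo (-R) R) :
    Tendsto (fun δ => arcsinePrimitive R θ (θ + δ) - arcsinePrimitive R θ (θ - δ))
      (𝓝 0) (𝓝 0) := by
  have hcont := (continuousOn_log_sq_sub_mul_add_sqrt_mul_sqrt hθ).continuousAt
    (Icc_mem_nhds hθ.1 hθ.2)
  refine (tendsto_add_sub_sub_of_continuousAt hcont).congr fun δ => ?_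
  simp only [arcsinePrimitive, sub_add_cancel_left, sub_sub_cancel, log_neg_eq_log]
  ring

theorem arcsinePrimitive_neg_neg (R θ y : ℝ) :
    arcsinePrimitive R (-θ) (-y) = arcsinePrimitive R θ y := by
  rw [arcsinePrimitive, arcsinePrimitive, neg_mul_neg, neg_sq, neg_sq, neg_sub_neg, ← neg_sub θ y,
    log_neg_eq_log]

theorem arcsinePrimitive_self (hR : R ≠ 0) (hθ : θ ≠ R) : arcsinePrimitive R θ R = log R := by
  have hsub : θ - R ≠ 0 := sub_ne_zero.2 hθ
  have hnum : R ^ 2 - θ * R = -R * (θ - R) := by ring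
  rw [arcsinePrimitive, sub_self, sqrt_zero, mul_zero, add_zero, hnum,
    log_mul (neg_ne_zero.2 hR) hsub, add_sub_cancel_right, log_neg_eq_log]

theorem arcsinePrimitive_neg_self (hR : R ≠ 0) (hθ : θ ≠ -R) :
    arcsinePrimitive R θ (-R) = log R := by
  rw [← arcsinePrimitive_neg_neg, neg_neg, arcsinePrimitive_self hR (mt neg_eq_iff_eq_neg.1 hθ)]

/-- The antiderivative in `y` of `√(R² - y²) / (θ - y)`. -/
noncomputable def semicirclePrimitive (R θ y : ℝ) : ℝ :=
  θ * arcsin (y / R) - √(R ^ 2 - y ^ 2) + √(R ^ 2 - θ ^ 2) * arcsinePrimitive R θ y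

theorem hasDerivAt_semicirclePrimitive (hθ : θ ∈ Ioo (-R) R) (hy : y ∈ Ioo (-R) R)
    (hne : y ≠ θ) :
    HasDerivAt (semicirclePrimitive R θ) (√(R ^ 2 - y ^ 2) / (θ - y)) y := by
  refine ((((hasDerivAt_arcsin_div hy).const_mul θ).sub (hasDerivAt_sqrt_sq_sub_sq hy)).add
    ((hasDerivAt_arcsinePrimitive hθ hy hne).const_mul √(R ^ 2 - θ ^ 2))).congr_deriv ?_
  have hy_pos := sq_sub_sq_pos_of_mem_Ioo hy
  have hr_ne : √(R ^ 2 - y ^ 2) ≠ 0 := (sqrt_pos.2 hy_pos).ne'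
  have hr : √(R ^ 2 - y ^ 2) ^ 2 = R ^ 2 - y ^ 2 := sq_sqrt hy_pos.le
  have hs : √(R ^ 2 - θ ^ 2) ^ 2 = R ^ 2 - θ ^ 2 := sq_sqrt (sq_sub_sq_pos_of_mem_Ioo hθ).le
  have hθy : θ - y ≠ 0 := sub_ne_zero.2 hne.symm
  field_simp
  linear_combination hs - hr

theorem continuousOn_semicirclePrimitive (hθ : θ ∈ Ioo (-R) R) :
    ContinuousOn (semicirclePrimitive R θ) (Icc (-R) R \ {θ}) :=
  ContinuousOn.add (by fun_prop) (continuousOn_const.mul (continuousOn_arcsinePrimitive hθ))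

theorem tendsto_semicirclePrimitive_add_sub_sub (hθ : θ ∈ Ioo (-R) R) :
    Tendsto (fun δ => semicirclePrimitive R θ (θ + δ) - semicirclePrimitive R θ (θ - δ))
      (𝓝 0) (𝓝 0) := by
  have hregular := tendsto_add_sub_sub_of_continuousAt (x := θ)
    (g := fun y => θ * arcsin (y / R) - √(R ^ 2 - y ^ 2)) (by fun_prop)
  have hlog := (tendsto_arcsinePrimitive_add_sub_sub hθ).const_mul √(R ^ 2 - θ ^ 2)
  have hsum := hregular.add hlog
  rw [mul_zero, add_zero] at hsum
  refine hsum.congr fun δ => ?_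
  simp only [semicirclePrimitive]
  ring

theorem semicirclePrimitive_self_sub_neg_self (hθ : θ ∈ Ioo (-R) R) :
    semicirclePrimitive R θ R - semicirclePrimitive R θ (-R) = π * θ := by
  have hR : R ≠ 0 := ne_of_gt (by linarith [hθ.1, hθ.2])
  simp only [semicirclePrimitive, arcsinePrimitive_self hR hθ.2.ne,
    arcsinePrimitive_neg_self hR hθ.1.ne', neg_div, div_self hR, arcsin_neg, arcsin_one, neg_sq]
  ring

end Primitive

theorem semicircle_principal_value_general {R θ : ℝ} (hθ : θ ∈ Ioo (-R) R) :
    Tendsto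
      (fun δ => ∫ y in {y : ℝ | y ∈ Icc (-R) R ∧ δ ≤ |y - θ|}, √(R ^ 2 - y ^ 2) / (π * (θ - y)))
      (𝓝[>] 0) (𝓝 θ) := by
  have hcont : ContinuousOn (fun y => √(R ^ 2 - y ^ 2) / (θ - y)) (Icc (-R) R \ {θ}) :=
    ContinuousOn.div (by fun_prop) (by fun_prop) fun _ hy => sub_ne_zero.2 (Ne.symm hy.2)
  have hlim := tendsto_setIntegral_le_abs_sub_of_hasDerivAt hθ
    (continuousOn_semicirclePrimitive hθ)
    (fun y hy => hasDerivAt_semicirclePrimitive hθ hy.1 hy.2)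
    (hcont.locallyIntegrableOn (measurableSet_Icc.diff (measurableSet_singleton θ)))
    ((tendsto_semicirclePrimitive_add_sub_sub hθ).mono_left nhdsWithin_le_nhds)
  rw [semicirclePrimitive_self_sub_neg_self hθ, sub_zero] at hlim
  have hscaled := hlim.div_const π
  rw [mul_div_cancel_left₀ θ pi_ne_zero] at hscaled
  simpa only [← integral_div, div_div, mul_comm π] using hscaled

/-- Principal value of the Stieltjes transform of the semicircle law:
`P.V. ∫_{-√2}^{√2} (1/(θ-y)) (1/π)√(2-y²) dy = θ`. -/
theorem semicircle_principal_value (θ : ℝ)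
    (hθ1 : -Real.sqrt 2 < θ) (hθ2 : θ < Real.sqrt 2) :
    Filter.Tendsto
      (fun δ : ℝ =>
        ∫ y in {y : ℝ | y ∈ Set.Icc (-Real.sqrt 2) (Real.sqrt 2) ∧ δ ≤ |y - θ|},
          Real.sqrt (2 - y ^ 2) / (Real.pi * (θ - y)))
      (nhdsWithin 0 (Set.Ioi 0)) (nhds θ) := by
  simpa using semicircle_principal_value_general (R := √2) ⟨hθ1, hθ2⟩
end

section
/- Estimate outside the bulk region (Lemma 4.3): fix θ with −√2 < θ < √2, R ∈ ℕ, α with −2/3 < α < −1/2, and q with 0 < q < 3/2. Set U_1^N = [−√2 + N^α, √2 − N^α] and x_θ^N = x/N + θ. Then limsup_{N→∞} sup_{|x| < R} ∫_{ℝ \ U_1^N} L^N(y,y)^q / |x_θ^N − y| dy = 0. -/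
open Real MeasureTheory Filter Set

/-!
Write `b_n = √(2n) ψ_n ψ_{n-1}`. The ladder relations for the Hermite functions say that
`(ψ_n²)' = b_n - b_{n+1}` and `2xψ_n² = b_n + b_{n+1}`. The first identity telescopes to
`(d/dx) K^N(x,x) = -b_N(x)`, and since `∫ |ψ_N ψ_{N-1}| ≤ 1` this gives `K^N(x,x) ≤ √(2N)`.
Combining both identities, `M = ∑_{k<N} t^k ψ_k²` solves `M' = -2 (1-t)/(1+t) x M` up to an error
`O(t^N N)`, which leads to the Mehler bound `M ≤ 2 (1-t)⁻² e^{-(1-t)x²/(1+t)}` for `0 ≤ t < 1`.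
As `K^N(x,x) ≤ t^{-N} M`, the function `L^N(y,y)` decays geometrically in `N` for each `|y| > √2`
and is dominated by a fixed Gaussian. By dominated convergence `L^N(y,y)^q` has vanishing integral
over the complement of the bulk, where the weight `1 / |x_θ^N - y|` stays bounded.
-/

open Polynomial in
lemma derivative_hermite_succ (n : ℕ) :
    derivative (hermite (n + 1)) = (n + 1) * hermite n := by
  induction n with
  | zero => simp
  | succ n ih =>
    rw [hermite_succ (n + 1), derivative_sub, derivative_mul, derivative_X, one_mul, ih,
      ← Nat.cast_succ, derivative_natCast_mul, hermite_succ n]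
    push_cast
    ring

lemma hermiteP_eq_aeval_hermite (n : ℕ) (x : ℝ) :
    hermiteP n x = √2 ^ n * Polynomial.aeval (√2 * x) (Polynomial.hermite n) := by
  have hscale (t : ℝ) : (√2 * t) ^ 2 / 2 = t ^ 2 := by
    rw [mul_pow, sq_sqrt zero_le_two]; ring
  have hderiv := congrFun (iteratedDeriv_comp_const_mul (n := n)
    (f := fun t : ℝ => exp (-(t ^ 2 / 2))) (by fun_prop) √2) x
  simp only [hscale] at hderiv
  rw [hermiteP, hderiv, iteratedDeriv_eq_iterate,
    Polynomial.deriv_gaussian_eq_hermite_mul_gaussian, hscale, exp_neg]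
  have hsign : (-1 : ℝ) ^ n * (-1) ^ n = 1 := by rw [← mul_pow]; simp
  have hexp : exp (x ^ 2) * (exp (x ^ 2))⁻¹ = 1 := mul_inv_cancel₀ (exp_ne_zero _)
  linear_combination √2 ^ n * Polynomial.aeval (√2 * x) (Polynomial.hermite n) *
    (exp (x ^ 2) * (exp (x ^ 2))⁻¹ * hsign + hexp)

/-- The constant `(√π n!)^{-1/2}` normalizing `e^{-x²/2} He_n(√2 x)` in `L²`, where `He_n` is the
probabilists' Hermite polynomial `Polynomial.hermite n`. -/
noncomputable def oscNorm (n : ℕ) : ℝ := (√(√π * n.factorial))⁻¹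

lemma osc_eq_aeval_hermite (n : ℕ) (x : ℝ) :
    osc n x =
      oscNorm n * exp (-x ^ 2 / 2) * Polynomial.aeval (√2 * x) (Polynomial.hermite n) := by
  have hroot : √(√π * 2 ^ n * n.factorial) = √2 ^ n * √(√π * n.factorial) := by
    rw [sqrt_eq_iff_mul_self_eq (by positivity) (by positivity), mul_mul_mul_comm, ← mul_pow,
      mul_self_sqrt zero_le_two, mul_self_sqrt (by positivity)]
    ring
  rw [osc, hermiteP_eq_aeval_hermite, hroot, oscNorm]
  field_simp

lemma oscNorm_eq_sqrt_mul_oscNorm_succ (n : ℕ) : oscNorm n = √(n + 1) * oscNorm (n + 1) := by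
  have hroot : √(√π * (n + 1).factorial) = √(n + 1) * √(√π * n.factorial) := by
    rw [← sqrt_mul (by positivity), Nat.factorial_succ]
    push_cast
    ring_nf
  rw [oscNorm, oscNorm, hroot]
  field_simp

open Polynomial in
lemma hasDerivAt_osc (n : ℕ) (x : ℝ) :
    HasDerivAt (osc n) (-x * osc n x + √2 * (oscNorm n * exp (-x ^ 2 / 2) *
      aeval (√2 * x) (derivative (hermite n)))) x := by
  have hexp : HasDerivAt (fun y : ℝ => exp (-y ^ 2 / 2)) (exp (-x ^ 2 / 2) * -x) x := by
    convert! ((hasDerivAt_pow 2 x).fun_neg.div_const 2).exp using 1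
    ring
  have hpoly := ((hermite n).hasDerivAt_aeval (√2 * x)).comp x ((hasDerivAt_id x).const_mul √2)
  rw [funext (osc_eq_aeval_hermite n)]
  refine ((hexp.const_mul (oscNorm n)).mul hpoly).congr_deriv ?_
  simp only [Function.comp_apply, mul_one]
  ring

lemma hasDerivAt_osc_raising (n : ℕ) (x : ℝ) :
    HasDerivAt (osc n) (x * osc n x - √(2 * (n + 1)) * osc (n + 1) x) x := by
  refine (hasDerivAt_osc n x).congr_deriv ?_
  have hH := congrArg (Polynomial.aeval (√2 * x)) (Polynomial.hermite_succ n)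
  simp only [map_sub, map_mul, Polynomial.aeval_X] at hH
  rw [osc_eq_aeval_hermite (n + 1), hH, osc_eq_aeval_hermite n, oscNorm_eq_sqrt_mul_oscNorm_succ n,
    sqrt_mul zero_le_two]
  linear_combination (√(n + 1) * oscNorm (n + 1) * exp (-x ^ 2 / 2) * x *
    Polynomial.aeval (√2 * x) (Polynomial.hermite n)) * mul_self_sqrt zero_le_two

-- For `n = 0` the truncated index `n - 1` is harmless because of the factor `√(2 * n)`.
lemma hasDerivAt_osc_lowering (n : ℕ) (x : ℝ) :
    HasDerivAt (osc n) (√(2 * n) * osc (n - 1) x - x * osc n x) x := by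
  refine (hasDerivAt_osc n x).congr_deriv ?_
  cases n with
  | zero => simp
  | succ n =>
    rw [derivative_hermite_succ, Nat.add_sub_cancel, osc_eq_aeval_hermite n,
      oscNorm_eq_sqrt_mul_oscNorm_succ n, Nat.cast_succ, sqrt_mul zero_le_two]
    simp only [map_mul, map_add, map_natCast, map_one]
    linear_combination (-√2 * oscNorm (n + 1) * exp (-x ^ 2 / 2) *
      Polynomial.aeval (√2 * x) (Polynomial.hermite n)) *
      mul_self_sqrt (show (0 : ℝ) ≤ n + 1 by positivity)

lemma continuous_osc (n : ℕ) : Continuous (osc n) :=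
  continuous_iff_continuousAt.2 fun x => (hasDerivAt_osc n x).continuousAt

open Polynomial in
lemma integrable_eval_mul_exp_neg_mul_sq (p : ℝ[X]) {b : ℝ} (hb : 0 < b) :
    Integrable fun x : ℝ => p.eval x * exp (-b * x ^ 2) := by
  induction p using Polynomial.induction_on' with
  | add p q hp hq => exact (hp.add hq).congr (.of_forall fun x => by simp [add_mul])
  | monomial k c =>
    have hk : Integrable fun x : ℝ => x ^ k * exp (-b * x ^ 2) := by
      simpa only [rpow_natCast] using
        integrable_rpow_mul_exp_neg_mul_sq hb (s := k) (by linarith [Nat.cast_nonneg (α := ℝ) k])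
    simpa only [eval_monomial, mul_assoc] using hk.const_mul c

open Polynomial in
lemma integrable_osc_mul_osc (m n : ℕ) : Integrable fun x => osc m x * osc n x := by
  let scaled (k : ℕ) : ℝ[X] := ((hermite k).map (Int.castRingHom ℝ)).comp (C √2 * X)
  have heval (k : ℕ) (x : ℝ) : aeval (√2 * x) (hermite k) = (scaled k).eval x := by
    simp [scaled, aeval_def, eval₂_eq_eval_map]
  refine ((integrable_eval_mul_exp_neg_mul_sq (scaled m * scaled n) one_pos).const_mul
    (oscNorm m * oscNorm n)).congr (.of_forall fun x => ?_)
  have hexp : exp (-1 * x ^ 2) = exp (-x ^ 2 / 2) * exp (-x ^ 2 / 2) := by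
    rw [← exp_add]; ring_nf
  simp only [osc_eq_aeval_hermite, heval, eval_mul, hexp]
  ring

lemma integrable_osc_sq (n : ℕ) : Integrable fun x => osc n x ^ 2 := by
  simpa only [sq] using integrable_osc_mul_osc n n

lemma hasDerivAt_osc_mul_osc_succ (n : ℕ) (x : ℝ) :
    HasDerivAt (fun y => osc n y * osc (n + 1) y)
      (√(2 * (n + 1)) * (osc n x ^ 2 - osc (n + 1) x ^ 2)) x := by
  refine ((hasDerivAt_osc_raising n x).mul (hasDerivAt_osc_lowering (n + 1) x)).congr_deriv ?_
  rw [Nat.add_sub_cancel, Nat.cast_succ]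
  ring

lemma integral_osc_sq (n : ℕ) : ∫ x, osc n x ^ 2 = 1 := by
  induction n with
  | zero =>
    have hsq (x : ℝ) : osc 0 x ^ 2 = (√π)⁻¹ * exp (-1 * x ^ 2) := by
      have hnorm : oscNorm 0 ^ 2 = (√π)⁻¹ := by
        rw [oscNorm, inv_pow, sq_sqrt (by positivity), Nat.factorial_zero, Nat.cast_one, mul_one]
      have hexp : exp (-x ^ 2 / 2) ^ 2 = exp (-1 * x ^ 2) := by rw [← exp_nat_mul]; ring_nf
      rw [osc_eq_aeval_hermite, Polynomial.hermite_zero, Polynomial.C_1, map_one, mul_one, mul_pow,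
        hnorm, hexp]
    simp only [hsq, integral_const_mul, integral_gaussian, div_one]
    exact inv_mul_cancel₀ (by positivity)
  | succ n ih =>
    have hzero := integral_eq_zero_of_hasDerivAt_of_integrable (hasDerivAt_osc_mul_osc_succ n)
      (((integrable_osc_sq n).sub (integrable_osc_sq (n + 1))).const_mul _)
      (integrable_osc_mul_osc n (n + 1))
    rw [integral_const_mul, integral_sub (integrable_osc_sq n) (integrable_osc_sq (n + 1)), ih,
      mul_eq_zero_iff_left (by positivity), sub_eq_zero] at hzero
    exact hzero.symm

lemma abs_osc_mul_osc_le (m n : ℕ) (x : ℝ) :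
    |osc m x * osc n x| ≤ (osc m x ^ 2 + osc n x ^ 2) / 2 := by
  rw [abs_mul, ← sq_abs (osc m x), ← sq_abs (osc n x)]
  linarith [two_mul_le_add_sq |osc m x| |osc n x|]

lemma integral_abs_osc_mul_osc_le_one (m n : ℕ) : ∫ x, |osc m x * osc n x| ≤ 1 := by
  have hm := integrable_osc_sq m
  have hn := integrable_osc_sq n
  calc ∫ x, |osc m x * osc n x|
      ≤ ∫ x, (osc m x ^ 2 + osc n x ^ 2) / 2 :=
        integral_mono (integrable_osc_mul_osc m n).abs ((hm.add hn).div_const 2)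
          (abs_osc_mul_osc_le m n)
    _ = 1 := by
        rw [integral_div, integral_add hm hn, integral_osc_sq, integral_osc_sq]
        norm_num

/-- The product `√(2n) ψ_n ψ_{n-1}`, here called a flux because the densities `ψ_k²` satisfy
`(ψ_k²)' = oscFlux k - oscFlux (k + 1)`. For `n = 0` the factor `√0` makes it vanish. -/
noncomputable def oscFlux (n : ℕ) (x : ℝ) : ℝ := √(2 * n) * osc n x * osc (n - 1) x

lemma oscFlux_zero (x : ℝ) : oscFlux 0 x = 0 := by simp [oscFlux]

lemma oscFlux_succ (n : ℕ) (x : ℝ) :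
    oscFlux (n + 1) x = √(2 * (n + 1)) * osc (n + 1) x * osc n x := by
  simp [oscFlux]

lemma oscFlux_add_oscFlux_succ (n : ℕ) (x : ℝ) :
    oscFlux n x + oscFlux (n + 1) x = 2 * x * osc n x ^ 2 := by
  rw [oscFlux_succ, oscFlux]
  linear_combination
    osc n x * (hasDerivAt_osc_lowering n x).unique (hasDerivAt_osc_raising n x)

lemma hasDerivAt_osc_sq (n : ℕ) (x : ℝ) :
    HasDerivAt (fun y => osc n y ^ 2) (oscFlux n x - oscFlux (n + 1) x) x := by
  refine ((hasDerivAt_osc_raising n x).fun_pow 2).congr_deriv ?_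
  have hsum := oscFlux_add_oscFlux_succ n x
  rw [oscFlux_succ] at hsum ⊢
  simp only [Nat.cast_ofNat, Nat.add_one_sub_one, pow_one]
  linear_combination -hsum

lemma integrable_oscFlux (n : ℕ) : Integrable (oscFlux n) :=
  ((integrable_osc_mul_osc n (n - 1)).const_mul √(2 * n)).congr
    (.of_forall fun _ => (mul_assoc ..).symm)

/-- The sum `∑_{k<N} t^k ψ_k(x)²`. For `t = 1` this is the diagonal of `kerK N`; for `N → ∞` and
`|t| < 1` it is the diagonal of the Mehler kernel. -/
noncomputable def mehlerSum (t : ℝ) (N : ℕ) (x : ℝ) : ℝ :=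
  ∑ k ∈ Finset.range N, t ^ k * osc k x ^ 2

lemma mehlerSum_one (N : ℕ) (x : ℝ) : mehlerSum 1 N x = kerK N x x := by
  simp [mehlerSum, kerK, sq]

lemma hasDerivAt_mehlerSum {t : ℝ} (ht : 1 + t ≠ 0) (N : ℕ) (x : ℝ) :
    HasDerivAt (mehlerSum t N)
      (-(2 * ((1 - t) / (1 + t)) * x * mehlerSum t N x) - 2 / (1 + t) * t ^ N * oscFlux N x) x := by
  induction N with
  | zero => simpa [mehlerSum, oscFlux_zero] using! hasDerivAt_const x (0 : ℝ)
  | succ N ih =>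
    have hsucc : mehlerSum t (N + 1) = fun y => mehlerSum t N y + t ^ N * osc N y ^ 2 :=
      funext fun y => Finset.sum_range_succ ..
    rw [hsucc]
    refine (ih.add ((hasDerivAt_osc_sq N x).const_mul (t ^ N))).congr_deriv ?_
    field_simp
    rw [pow_succ]
    linear_combination (t - 1) * t ^ N * oscFlux_add_oscFlux_succ N x

lemma hasDerivAt_kerK_diag (N : ℕ) (x : ℝ) :
    HasDerivAt (fun y => kerK N y y) (-oscFlux N x) x := by
  simp only [← mehlerSum_one]
  refine (hasDerivAt_mehlerSum (by norm_num) N x).congr_deriv ?_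
  norm_num

lemma norm_le_integral_norm_of_hasDerivAt {E : Type*} [NormedAddCommGroup E] [NormedSpace ℝ E]
    [CompleteSpace E] {f f' : ℝ → E} (hderiv : ∀ x, HasDerivAt f (f' x) x)
    (hf' : Integrable f') (hf : Integrable f) (x : ℝ) : ‖f x‖ ≤ ∫ y, ‖f' y‖ := by
  have htop : Tendsto f atTop (nhds 0) :=
    tendsto_zero_of_hasDerivAt_of_integrableOn_Ioi (a := x) (fun y _ => hderiv y)
      hf'.integrableOn hf.integrableOn
  have hftc : ∫ y in Ioi x, f' y = 0 - f x :=
    integral_Ioi_of_hasDerivAt_of_tendsto' (fun y _ => hderiv y) hf'.integrableOn htop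
  calc ‖f x‖ = ‖∫ y in Ioi x, f' y‖ := by rw [hftc, zero_sub, norm_neg]
    _ ≤ ∫ y in Ioi x, ‖f' y‖ := norm_integral_le_integral_norm _
    _ ≤ ∫ y, ‖f' y‖ := setIntegral_le_integral hf'.norm (.of_forall fun _ => norm_nonneg _)

lemma kerK_diag_nonneg (N : ℕ) (x : ℝ) : 0 ≤ kerK N x x :=
  Finset.sum_nonneg fun _ _ => mul_self_nonneg _

lemma kerK_diag_le (N : ℕ) (x : ℝ) : kerK N x x ≤ √(2 * N) := by
  have hint : Integrable fun y => kerK N y y :=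
    integrable_finsetSum _ fun k _ => integrable_osc_mul_osc k k
  calc kerK N x x
      ≤ ∫ y, ‖-oscFlux N y‖ := (le_norm_self _).trans <| norm_le_integral_norm_of_hasDerivAt
        (hasDerivAt_kerK_diag N) (integrable_oscFlux N).neg hint x
    _ = √(2 * N) * ∫ y, |osc N y * osc (N - 1) y| := by
        simp only [norm_neg, norm_eq_abs, oscFlux, mul_assoc, abs_mul √(2 * N),
          abs_of_nonneg (sqrt_nonneg _), integral_const_mul]
    _ ≤ √(2 * N) := mul_le_of_le_one_right (sqrt_nonneg _) (integral_abs_osc_mul_osc_le_one ..)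

lemma osc_sq_le (n : ℕ) (x : ℝ) : osc n x ^ 2 ≤ √(2 * (n + 1)) := by
  have hterm : osc n x ^ 2 ≤ kerK (n + 1) x x := by
    rw [sq]
    exact Finset.single_le_sum (f := fun k => osc k x * osc k x)
      (fun _ _ => mul_self_nonneg _) (Finset.self_mem_range_succ n)
  exact_mod_cast hterm.trans (kerK_diag_le (n + 1) x)

lemma abs_oscFlux_le (n : ℕ) (x : ℝ) : |oscFlux n x| ≤ 2 * (n + 1) := by
  have hprod : |osc n x * osc (n - 1) x| ≤ √(2 * (n + 1)) := by
    have hpred : osc (n - 1) x ^ 2 ≤ √(2 * (n + 1)) :=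
      (osc_sq_le (n - 1) x).trans (by gcongr; exact n.sub_le 1)
    linarith [abs_osc_mul_osc_le n (n - 1) x, osc_sq_le n x]
  calc |oscFlux n x| = √(2 * n) * |osc n x * osc (n - 1) x| := by
        rw [oscFlux, mul_assoc, abs_mul, abs_of_nonneg (sqrt_nonneg _)]
    _ ≤ √(2 * (n + 1)) * √(2 * (n + 1)) := by gcongr; linarith
    _ = 2 * (n + 1) := mul_self_sqrt (by positivity)

section Mehler

variable {t : ℝ}

lemma mehlerSum_mono (ht0 : 0 ≤ t) (x : ℝ) : Monotone fun N => mehlerSum t N x := fun _ _ hMN =>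
  Finset.sum_le_sum_of_subset_of_nonneg (Finset.range_mono hMN) fun _ _ _ => by positivity

lemma mehlerSum_le (ht0 : 0 ≤ t) (ht1 : t < 1) (N : ℕ) (x : ℝ) :
    mehlerSum t N x ≤ 2 / (1 - t) ^ 2 := by
  have hsum : HasSum (fun k : ℕ => 2 * ((k + 1) * t ^ k)) (2 * (1 / (1 - t) ^ 2)) := by
    simpa using (hasSum_choose_mul_geometric_of_norm_lt_one 1
      (by rwa [norm_of_nonneg ht0] : ‖t‖ < 1)).mul_left 2
  have hterm (k : ℕ) : t ^ k * osc k x ^ 2 ≤ 2 * ((k + 1) * t ^ k) := by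
    have hsqrt : √(2 * ((k : ℝ) + 1)) ≤ 2 * (k + 1) :=
      sqrt_le_iff.2 ⟨by positivity, by nlinarith [Nat.cast_nonneg (α := ℝ) k]⟩
    calc t ^ k * osc k x ^ 2 ≤ t ^ k * (2 * (k + 1)) := by
          gcongr; exact (osc_sq_le k x).trans hsqrt
      _ = 2 * ((k + 1) * t ^ k) := by ring
  calc mehlerSum t N x ≤ ∑ k ∈ Finset.range N, 2 * ((k + 1) * t ^ k) :=
        Finset.sum_le_sum fun k _ => hterm k
    _ ≤ 2 * (1 / (1 - t) ^ 2) := sum_le_hasSum _ (fun k _ => by positivity) hsum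
    _ = 2 / (1 - t) ^ 2 := by ring

lemma hasDerivAt_mehlerSum_mul_exp (ht : 1 + t ≠ 0) (N : ℕ) (x : ℝ) :
    HasDerivAt (fun y => mehlerSum t N y * exp ((1 - t) / (1 + t) * y ^ 2))
      (-(2 / (1 + t) * t ^ N * oscFlux N x * exp ((1 - t) / (1 + t) * x ^ 2))) x := by
  have hexp := ((hasDerivAt_pow 2 x).const_mul ((1 - t) / (1 + t))).exp
  refine ((hasDerivAt_mehlerSum ht N x).mul hexp).congr_deriv ?_
  norm_num
  ring

lemma mehlerSum_le_add_error (ht0 : 0 ≤ t) (ht1 : t < 1) (N : ℕ) (x : ℝ) :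
    mehlerSum t N x ≤ mehlerSum t N 0 * exp (-((1 - t) / (1 + t) * x ^ 2)) +
      4 * ((N + 1) * t ^ N) * |x| := by
  set u := (1 - t) / (1 + t) with hu
  have hu0 : 0 ≤ u := div_nonneg (by linarith) (by linarith)
  have hderiv_le : ∀ z ∈ uIcc 0 x, ‖-(2 / (1 + t) * t ^ N * oscFlux N z * exp (u * z ^ 2))‖ ≤
      4 * ((N + 1) * t ^ N) * exp (u * x ^ 2) := fun z hz => by
    have hzx : u * z ^ 2 ≤ u * x ^ 2 := mul_le_mul_of_nonneg_left
      (sq_le_sq.2 (by simpa using abs_sub_left_of_mem_uIcc hz)) hu0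
    have hcoef : 2 / (1 + t) ≤ 2 := div_le_self zero_le_two (by linarith)
    rw [norm_neg, norm_eq_abs, abs_mul, abs_exp, abs_mul, abs_of_nonneg (by positivity)]
    calc 2 / (1 + t) * t ^ N * |oscFlux N z| * exp (u * z ^ 2)
        ≤ 2 * t ^ N * (2 * (N + 1)) * exp (u * x ^ 2) := by
          gcongr; exact abs_oscFlux_le N z
      _ = 4 * ((N + 1) * t ^ N) * exp (u * x ^ 2) := by ring
  have hmean := (convex_uIcc 0 x).norm_image_sub_le_of_norm_hasDerivWithin_le
    (fun z _ => (hasDerivAt_mehlerSum_mul_exp (by linarith) N z).hasDerivWithinAt)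
    hderiv_le left_mem_uIcc right_mem_uIcc
  have hmean' := (le_abs_self _).trans hmean
  rw [← hu, zero_pow two_ne_zero, mul_zero, exp_zero, mul_one, sub_zero, norm_eq_abs] at hmean'
  rw [exp_neg, ← mul_le_mul_iff_of_pos_right (exp_pos (u * x ^ 2)), add_mul,
    inv_mul_cancel_right₀ (exp_ne_zero _)]
  linarith

lemma mehlerSum_le_exp (ht0 : 0 ≤ t) (ht1 : t < 1) (N : ℕ) (x : ℝ) :
    mehlerSum t N x ≤ 2 / (1 - t) ^ 2 * exp (-((1 - t) / (1 + t) * x ^ 2)) := by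
  set g := exp (-((1 - t) / (1 + t) * x ^ 2))
  have herr : Tendsto (fun M : ℕ => ((M : ℝ) + 1) * t ^ M) atTop (nhds 0) := by
    simpa [add_mul] using (tendsto_self_mul_const_pow_of_lt_one ht0 ht1).add
      (tendsto_pow_atTop_nhds_zero_of_lt_one ht0 ht1)
  have hlim : Tendsto (fun M : ℕ => 2 / (1 - t) ^ 2 * g + 4 * ((M + 1) * t ^ M) * |x|) atTop
      (nhds (2 / (1 - t) ^ 2 * g)) := by
    simpa using ((herr.const_mul 4).mul_const |x|).const_add (2 / (1 - t) ^ 2 * g)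
  refine ge_of_tendsto hlim ((eventually_ge_atTop N).mono fun M hNM => ?_)
  calc mehlerSum t N x ≤ mehlerSum t M x := mehlerSum_mono ht0 x hNM
    _ ≤ mehlerSum t M 0 * g + 4 * ((M + 1) * t ^ M) * |x| := mehlerSum_le_add_error ht0 ht1 M x
    _ ≤ 2 / (1 - t) ^ 2 * g + 4 * ((M + 1) * t ^ M) * |x| := by
        gcongr; exact mehlerSum_le ht0 ht1 M 0

lemma kerK_diag_le_mehlerSum (ht0 : 0 < t) (ht1 : t ≤ 1) (N : ℕ) (x : ℝ) :
    kerK N x x ≤ t⁻¹ ^ N * mehlerSum t N x := by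
  rw [inv_pow, le_inv_mul_iff₀ (by positivity), kerK, mehlerSum, Finset.mul_sum]
  refine Finset.sum_le_sum fun k hk => ?_
  rw [← sq]
  gcongr ?_ * _
  exact pow_le_pow_of_le_one ht0.le ht1 (Finset.mem_range.1 hk).le

end Mehler

lemma kerL_diag_nonneg (N : ℕ) (y : ℝ) : 0 ≤ kerL N y y :=
  mul_nonneg (by positivity) (kerK_diag_nonneg N _)

lemma continuous_kerL_diag (N : ℕ) : Continuous fun y => kerL N y y :=
  continuous_const.mul <| continuous_finsetSum _ fun k _ =>
    ((continuous_osc k).comp (continuous_const_mul _)).mul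
      ((continuous_osc k).comp (continuous_const_mul _))

lemma kerL_diag_le_sqrt_two (N : ℕ) (y : ℝ) : kerL N y y ≤ √2 := by
  refine inv_mul_le_of_le_mul₀ (sqrt_nonneg _) (sqrt_nonneg _) ?_
  rw [← sqrt_mul N.cast_nonneg, mul_comm (N : ℝ) 2]
  exact kerK_diag_le N _

lemma kerL_diag_le_pow {t : ℝ} (ht0 : 0 < t) (ht1 : t < 1) (N : ℕ) (y : ℝ) :
    kerL N y y ≤ 2 / (1 - t) ^ 2 * (t⁻¹ * exp (-((1 - t) / (1 + t) * y ^ 2))) ^ N := by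
  have hinv : (√(N : ℝ))⁻¹ ≤ 1 := by
    rcases N.eq_zero_or_pos with rfl | hN
    · simp
    · exact inv_le_one_of_one_le₀ (one_le_sqrt.2 (by exact_mod_cast hN))
  have hexp : exp (-((1 - t) / (1 + t) * (√N * y) ^ 2)) =
      exp (-((1 - t) / (1 + t) * y ^ 2)) ^ N := by
    rw [← exp_nat_mul, mul_pow, sq_sqrt N.cast_nonneg]
    ring_nf
  calc kerL N y y ≤ kerK N (√N * y) (√N * y) :=
        mul_le_of_le_one_left (kerK_diag_nonneg N _) hinv
    _ ≤ t⁻¹ ^ N * mehlerSum t N (√N * y) := kerK_diag_le_mehlerSum ht0 ht1.le N _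
    _ ≤ t⁻¹ ^ N * (2 / (1 - t) ^ 2 * exp (-((1 - t) / (1 + t) * (√N * y) ^ 2))) := by
        gcongr; exact mehlerSum_le_exp ht0.le ht1 N _
    _ = 2 / (1 - t) ^ 2 * (t⁻¹ * exp (-((1 - t) / (1 + t) * y ^ 2))) ^ N := by
        rw [hexp, mul_pow]; ring

lemma exists_inv_mul_exp_lt_one {y : ℝ} (hy : 2 < y ^ 2) :
    ∃ t : ℝ, 0 < t ∧ t < 1 ∧ t⁻¹ * exp (-((1 - t) / (1 + t) * y ^ 2)) < 1 := by
  obtain ⟨s, hs0, hsy⟩ : ∃ s, 0 < s ∧ 2 + s < y ^ 2 :=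
    ⟨(y ^ 2 - 2) / 2, by linarith, by linarith⟩
  refine ⟨(1 + s)⁻¹, by positivity, inv_lt_one_of_one_lt₀ (by linarith), ?_⟩
  have hfrac : (1 - (1 + s)⁻¹) / (1 + (1 + s)⁻¹) * y ^ 2 = s * (y ^ 2 / (2 + s)) := by
    field_simp
    ring
  rw [hfrac, inv_inv, exp_neg, ← div_eq_mul_inv, div_lt_one (exp_pos _)]
  calc 1 + s ≤ exp s := by linarith [add_one_le_exp s]
    _ < exp (s * (y ^ 2 / (2 + s))) := by
        gcongr
        exact lt_mul_of_one_lt_right hs0 ((one_lt_div (by positivity)).2 hsy)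

lemma tendsto_kerL_diag_zero {y : ℝ} (hy : √2 < |y|) :
    Tendsto (fun N => kerL N y y) atTop (nhds 0) := by
  have hy2 : 2 < y ^ 2 := by rwa [← sq_abs, ← sqrt_lt' ((sqrt_nonneg 2).trans_lt hy)]
  obtain ⟨t, ht0, ht1, hbase⟩ := exists_inv_mul_exp_lt_one hy2
  refine squeeze_zero (fun N => kerL_diag_nonneg N y) (fun N => kerL_diag_le_pow ht0 ht1 N y) ?_
  simpa only [mul_zero] using
    (tendsto_pow_atTop_nhds_zero_of_lt_one (by positivity) hbase).const_mul (2 / (1 - t) ^ 2)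

lemma kerL_diag_le_gaussian (N : ℕ) (y : ℝ) : kerL N y y ≤ 16 * exp (-y ^ 2 / 3) := by
  rcases N.eq_zero_or_pos with rfl | hN
  · simpa [kerL, kerK] using (exp_pos _).le
  rcases le_total 1 (2 * exp (-y ^ 2 / 3)) with hcore | htail
  · have htwo : √2 ≤ 2 := (sqrt_le_left zero_le_two).2 (by norm_num)
    linarith [kerL_diag_le_sqrt_two N y]
  · calc kerL N y y ≤ 8 * (2 * exp (-y ^ 2 / 3)) ^ N := by
          convert! kerL_diag_le_pow one_half_pos one_half_lt_one N y using 3 <;> norm_num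
          ring
      _ ≤ 8 * (2 * exp (-y ^ 2 / 3)) := by
          gcongr; exact pow_le_of_le_one (by positivity) htail hN.ne'
      _ = 16 * exp (-y ^ 2 / 3) := by ring

section Tail

variable {q : ℝ}

lemma integrable_gaussian_majorant (hq : 0 < q) :
    Integrable fun y : ℝ => 16 ^ q * exp (-(q / 3) * y ^ 2) :=
  (integrable_exp_neg_mul_sq (by positivity)).const_mul _

lemma norm_kerL_diag_rpow_le (hq : 0 ≤ q) (N : ℕ) (y : ℝ) :
    ‖kerL N y y ^ q‖ ≤ 16 ^ q * exp (-(q / 3) * y ^ 2) := by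
  rw [norm_of_nonneg (rpow_nonneg (kerL_diag_nonneg N y) q)]
  calc kerL N y y ^ q ≤ (16 * exp (-y ^ 2 / 3)) ^ q :=
        rpow_le_rpow (kerL_diag_nonneg N y) (kerL_diag_le_gaussian N y) hq
    _ = 16 ^ q * exp (-(q / 3) * y ^ 2) := by
        rw [mul_rpow (by norm_num) (exp_pos _).le, ← exp_mul]
        ring_nf

lemma integrable_kerL_diag_rpow (hq : 0 < q) (N : ℕ) : Integrable fun y => kerL N y y ^ q :=
  (integrable_gaussian_majorant hq).mono'
    ((continuous_kerL_diag N).rpow_const fun _ => .inr hq.le).aestronglyMeasurable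
    (.of_forall (norm_kerL_diag_rpow_le hq.le N))

/-- The interval `[-√2 + a, √2 - a]`; the bulk region `U_1^N` is `bulk (N ^ α)`. -/
def bulk (a : ℝ) : Set ℝ := Icc (-√2 + a) (√2 - a)

lemma mem_bulk_iff {a y : ℝ} : y ∈ bulk a ↔ |y| ≤ √2 - a := by
  rw [bulk, mem_Icc, abs_le, neg_sub', sub_neg_eq_add]

lemma measurableSet_bulk (a : ℝ) : MeasurableSet (bulk a) := measurableSet_Icc

lemma tendsto_setIntegral_compl_bulk_kerL_diag_rpow {a : ℕ → ℝ} (ha : Tendsto a atTop (nhds 0))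
    (hq : 0 < q) :
    Tendsto (fun N => ∫ y in (bulk (a N))ᶜ, kerL N y y ^ q) atTop (nhds 0) := by
  simp only [← integral_indicator (measurableSet_bulk _).compl]
  rw [← integral_zero ℝ ℝ]
  refine tendsto_integral_of_dominated_convergence _
    (fun N => ((integrable_kerL_diag_rpow hq N).indicator
      (measurableSet_bulk (a N)).compl).aestronglyMeasurable)
    (integrable_gaussian_majorant hq)
    (fun N => .of_forall fun y => (norm_indicator_le_norm_self _ _).trans
      (norm_kerL_diag_rpow_le hq.le N y)) ?_
  have hedge : ∀ᵐ y : ℝ, |y| ≠ √2 := by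
    filter_upwards [volume.ae_ne √2, volume.ae_ne (-√2)] with y hy hy'
    exact fun h => (eq_or_eq_neg_of_abs_eq h).elim hy hy'
  filter_upwards [hedge] with y hy
  rcases hy.lt_or_gt with hin | hout
  · have hmem : ∀ᶠ N in atTop, y ∈ bulk (a N) := by
      filter_upwards [ha.eventually_lt_const (sub_pos.2 hin)] with N hN
      exact mem_bulk_iff.2 (by linarith)
    refine tendsto_const_nhds.congr' (hmem.mono fun N hN => ?_)
    exact (indicator_of_notMem (notMem_compl_iff.2 hN) _).symm
  · have hpow : Tendsto (fun N => kerL N y y ^ q) atTop (nhds 0) := by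
      simpa only [zero_rpow hq.ne'] using (tendsto_kerL_diag_zero hout).rpow_const (.inr hq.le)
    refine squeeze_zero_norm (fun N => norm_indicator_le_norm_self _ _) ?_
    simpa using hpow.norm

end Tail

section Singularity

variable {f : ℝ → ℝ} {s : Set ℝ} {c δ : ℝ}

lemma integrableOn_div_abs_sub (hf : IntegrableOn f s) (hsm : MeasurableSet s) (hδ : 0 < δ)
    (hs : ∀ y ∈ s, δ ≤ |c - y|) : IntegrableOn (fun y => f y / |c - y|) s := by
  simp only [div_eq_mul_inv]
  refine hf.mul_bdd (c := δ⁻¹) (by fun_prop) ((ae_restrict_iff' hsm).2 (.of_forall fun y hy => ?_))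
  rw [norm_inv, norm_eq_abs, abs_abs]
  exact inv_anti₀ hδ (hs y hy)

lemma setIntegral_div_abs_sub_le (hf : IntegrableOn f s) (hf0 : ∀ y ∈ s, 0 ≤ f y)
    (hsm : MeasurableSet s) (hδ : 0 < δ) (hs : ∀ y ∈ s, δ ≤ |c - y|) :
    ∫ y in s, f y / |c - y| ≤ (∫ y in s, f y) / δ := by
  rw [← integral_div]
  exact setIntegral_mono_on (integrableOn_div_abs_sub hf hsm hδ hs) (hf.div_const δ) hsm
    fun y hy => div_le_div_of_nonneg_left (hf0 y hy) hδ (hs y hy)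

end Singularity

lemma eventually_forall_setIntegral_compl_bulk_lt {b q ε : ℝ} {a : ℕ → ℝ} (hb : b < √2)
    (ha : Tendsto a atTop (nhds 0)) (hq : 0 < q) (hε : 0 < ε) :
    ∀ᶠ N in atTop, ∀ c : ℝ, |c| ≤ b →
      IntegrableOn (fun y => kerL N y y ^ q / |c - y|) (bulk (a N))ᶜ ∧
        ∫ y in (bulk (a N))ᶜ, kerL N y y ^ q / |c - y| < ε := by
  obtain ⟨δ, hδ, hδb⟩ : ∃ δ, 0 < δ ∧ 2 * δ = √2 - b := ⟨(√2 - b) / 2, by linarith, by ring⟩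
  filter_upwards [ha.eventually_lt_const hδ,
    (tendsto_setIntegral_compl_bulk_kerL_diag_rpow ha hq).eventually_lt_const (mul_pos hε hδ)]
    with N haN hint c hc
  have hdist : ∀ y ∈ (bulk (a N))ᶜ, δ ≤ |c - y| := fun y hy => by
    rw [mem_compl_iff, mem_bulk_iff, not_le] at hy
    linarith [abs_sub_abs_le_abs_sub y c, abs_sub_comm y c]
  have hL : IntegrableOn (fun y => kerL N y y ^ q) (bulk (a N))ᶜ :=
    (integrable_kerL_diag_rpow hq N).integrableOn
  have hsm := (measurableSet_bulk (a N)).compl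
  refine ⟨integrableOn_div_abs_sub hL hsm hδ hdist, ?_⟩
  calc ∫ y in (bulk (a N))ᶜ, kerL N y y ^ q / |c - y|
      ≤ (∫ y in (bulk (a N))ᶜ, kerL N y y ^ q) / δ := setIntegral_div_abs_sub_le hL
        (fun y _ => rpow_nonneg (kerL_diag_nonneg N y) q) hsm hδ hdist
    _ < ε := (div_lt_iff₀ hδ).2 hint

lemma tendsto_natCast_rpow_of_neg {α : ℝ} (hα : α < 0) :
    Tendsto (fun N : ℕ => (N : ℝ) ^ α) atTop (nhds 0) := by
  simpa only [neg_neg, Function.comp_def] using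
    (tendsto_rpow_neg_atTop (neg_pos.2 hα)).comp tendsto_natCast_atTop_atTop

theorem outside_bulk_estimate_general {θ q ε : ℝ} {a : ℕ → ℝ} (hθ : |θ| < √2) (R : ℝ)
    (ha : Tendsto a atTop (nhds 0)) (hq : 0 < q) (hε : 0 < ε) :
    ∀ᶠ N : ℕ in atTop, ∀ x : ℝ, |x| < R →
      IntegrableOn (fun y => kerL N y y ^ q / |x / N + θ - y|)
          (univ \ Icc (-√2 + a N) (√2 - a N)) ∧
        ∫ y in univ \ Icc (-√2 + a N) (√2 - a N), kerL N y y ^ q / |x / N + θ - y| < ε := by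
  obtain ⟨b, hθb, hb⟩ := exists_between hθ
  filter_upwards [eventually_forall_setIntegral_compl_bulk_lt hb ha hq hε,
    (tendsto_const_div_atTop_nhds_zero_nat R).eventually_lt_const (sub_pos.2 hθb)]
    with N hN hRN x hx
  have hcentre : |x / N + θ| ≤ b := by
    have hxN : |x / N| ≤ R / N := by
      rw [abs_div, Nat.abs_cast]
      gcongr
    linarith [abs_add_le (x / N) θ]
  simpa only [compl_eq_univ_sdiff, bulk] using hN _ hcentre

/-- Estimate outside the bulk region (Lemma 4.3):
`limsup_{N→∞} sup_{|x|<R} ∫_{ℝ \ U_1^N} L^N(y,y)^q / |x_θ^N - y| dy = 0`. -/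
theorem outside_bulk_estimate (θ : ℝ) (hθ1 : -Real.sqrt 2 < θ) (hθ2 : θ < Real.sqrt 2)
    (R : ℕ) (hR : 1 ≤ R) (α q : ℝ) (hα1 : -2/3 < α) (hα2 : α < -1/2)
    (hq1 : 0 < q) (hq2 : q < 3/2) :
    ∀ ε : ℝ, 0 < ε → ∃ N0 : ℕ, ∀ N : ℕ, N0 ≤ N → ∀ x : ℝ, |x| < (R : ℝ) →
      (∫ y in Set.univ \ Set.Icc (-Real.sqrt 2 + (N : ℝ) ^ α) (Real.sqrt 2 - (N : ℝ) ^ α),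
        kerL N y y ^ q / |x / (N : ℝ) + θ - y|) < ε := by
  exact fun ε hε => eventually_atTop.1 <| (outside_bulk_estimate_general (abs_lt.2 ⟨hθ1, hθ2⟩) R
    (tendsto_natCast_rpow_of_neg (by linarith)) hq1 hε).mono fun N hN x hx => (hN x hx).2
end
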